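/- Let a, b, c ∈ ℤ with Δ := √(b² − 4ac) a positive integer, let x₀, y₀ ∈ ℝ and n ∈ ℝ with n ≠ 0, and let h be the hyperbola {(x,y) ∈ ℝ² : a(x−x₀)² + b(x−x₀)(y−y₀) + c(y−y₀)² = n}. Let H be the closure of one of the two convex connected components of ℝ² \ h, and set m := max{2Δ, |n|/Δ}. Then the number of vertices (extreme points) of conv(H ∩ ℤ²) is at most C·m^{1/3}·(log₂ m + 2), where C = 2^{7/3}·π^{2/3}. -/

import Mathlib

/-!
Since `b² - 4ac = Δ²`, the quadratic form factors over `ℤ` into two linear forms of determinant `Δ`.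
After sign changes, the associated affine functions `S` and `T` turn the hyperbola into `S T = N`
with `N = |n|`, and `H` into `{S > 0, S T ≥ N}` (`lt_of_convex_component`, `closure_component`). In
the coordinates `(S, T)` the integer points become a translate of a lattice of determinant `Δ` which
contains `(Δ, 0)` and `(0, Δ)`, and any two of them have coordinates differing by integers.

Let `(S, T)` be a vertex of the hull. Translating by `±(0, Δ)` and `±(Δ, 0)` gives
`S T < N + Δ min(S, T)`. The hull is closed under increasing either coordinate, so the vertices form
a strictly decreasing, strictly convex chain; `isVertexConfig_image` collects these facts. At most
one vertex has `S < 1` and at most one has `T < 1`. By symmetry consider those with `1 ≤ S ≤ T`; for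
them `S < m`, so at most `log₂ m + 1` dyadic intervals `[σ, 2σ)` contain a value of `S`.

The vertices with `S ∈ [σ, 2σ)` lie in a box of width `X = σ` and height `Y = Δ + N / (2σ)`, and
`X Y ≤ 3mΔ/2`. Give an edge `(x, -y)` of their chain the weight `w = x/X + y/Y`. The weights add up
to at most `2`, so at most `2 m^(1/3)` edges have weight above `m^(-1/3)`. For two edges the
cross product is `X Y w w'` times the difference of the numbers `(x/X)/w ∈ [0, 1]`, and it is a
nonzero multiple of `Δ`. Hence for the light edges these numbers are `(3/2 m^(1/3))⁻¹`-separated, and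
there are at most `3/2 m^(1/3) + 1` of them (`card_edges_le`). So every dyadic interval carries at
most `2 + 7/2 m^(1/3)` vertices, and summing up gives a bound below the required one
(`numeric_bound`).
-/

noncomputable section

/-- The integer lattice `ℤ² ⊂ ℝ²`. -/
def intLattice : Set (ℝ × ℝ) := {q | ∃ a b : ℤ, q = ((a : ℝ), (b : ℝ))}

/-- The hyperbola `a(x-x₀)² + b(x-x₀)(y-y₀) + c(y-y₀)² = n`. -/
def hypSet (a b c : ℤ) (x₀ y₀ n : ℝ) : Set (ℝ × ℝ) :=
  {q | (a : ℝ) * (q.1 - x₀) ^ 2 + (b : ℝ) * (q.1 - x₀) * (q.2 - y₀)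
      + (c : ℝ) * (q.2 - y₀) ^ 2 = n}

/-! ### Counting the edges of a convex lattice chain -/

lemma card_le_of_separated {ι : Type*} (I : Finset ι) (a : ι → ℝ) (δ : ℝ) (hδ : 0 < δ)
    (h0 : ∀ i ∈ I, 0 ≤ a i) (h1 : ∀ i ∈ I, a i ≤ 1)
    (hsep : ∀ i ∈ I, ∀ j ∈ I, i ≠ j → δ ≤ |a i - a j|) :
    (I.card : ℝ) ≤ 1 / δ + 1 := by
  have hcard : I.card ≤ (Finset.range (⌊1 / δ⌋₊ + 1)).card := by
    apply Finset.card_le_card_of_injOn (fun i => ⌊a i / δ⌋₊)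
    · intro i hi
      have : ⌊a i / δ⌋₊ ≤ ⌊1 / δ⌋₊ := by
        apply Nat.floor_mono
        gcongr
        exact h1 i hi
      simpa using Nat.lt_succ_of_le this
    · intro i hi j hj hij
      by_contra hne
      have hs := hsep i hi j hj hne
      have hij' : ⌊a i / δ⌋₊ = ⌊a j / δ⌋₊ := hij
      have hi0 : 0 ≤ a i / δ := div_nonneg (h0 i hi) hδ.le
      have hj0 : 0 ≤ a j / δ := div_nonneg (h0 j hj) hδ.le
      have b1 := Nat.floor_le hi0
      have b2 := Nat.floor_le hj0
      have b3 := Nat.lt_floor_add_one (a i / δ)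
      have b4 := Nat.lt_floor_add_one (a j / δ)
      rw [hij'] at b1 b3
      have e1 : |a i / δ - a j / δ| < 1 := by
        rw [abs_lt]; constructor <;> linarith
      rw [← sub_div, abs_div, abs_of_pos hδ, div_lt_one hδ] at e1
      linarith
  rw [Finset.card_range] at hcard
  have h2 : (⌊1 / δ⌋₊ : ℝ) ≤ 1 / δ := Nat.floor_le (by positivity)
  have h3 : (I.card : ℝ) ≤ (⌊1 / δ⌋₊ : ℝ) + 1 := by exact_mod_cast hcard
  linarith

/-- A chain of `k` edges `(x i, -y i)` inside an `X × Y` box, whose pairwise cross products are at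
least `D`, has `O((XY/D)^(1/3))` edges; `μ` stands for `m^(1/3)`. -/
lemma card_edges_le (k : ℕ) (x y : ℕ → ℝ) (X Y D m μ : ℝ)
    (hX : 0 < X) (hY : 0 < Y) (hD : 0 < D) (hμ : 0 < μ) (hμm : μ ^ 3 = m)
    (hx : ∀ i < k, 0 < x i) (hy : ∀ i < k, 0 < y i)
    (hcross : ∀ i j, i < j → j < k → D ≤ y i * x j - x i * y j)
    (hsx : ∑ i ∈ Finset.range k, x i ≤ X) (hsy : ∑ i ∈ Finset.range k, y i ≤ Y)
    (hXY : X * Y ≤ 3 / 2 * m * D) :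
    (k : ℝ) ≤ 1 + 7 / 2 * μ := by
  classical
  set w : ℕ → ℝ := fun i => x i / X + y i / Y with hw
  have hwpos : ∀ i < k, 0 < w i := fun i hi =>
    add_pos (div_pos (hx i hi) hX) (div_pos (hy i hi) hY)
  have hwsum : ∑ i ∈ Finset.range k, w i ≤ 2 := by
    rw [hw, Finset.sum_add_distrib, ← Finset.sum_div, ← Finset.sum_div]
    have := (div_le_one hX).2 hsx
    have := (div_le_one hY).2 hsy
    linarith
  -- `A` holds the light edges, `B` the heavy ones
  set A := (Finset.range k).filter (fun i => w i ≤ 1 / μ) with hA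
  set B := (Finset.range k).filter (fun i => ¬ w i ≤ 1 / μ) with hB
  have hAB : A.card + B.card = k := by
    rw [hA, hB, Finset.card_filter_add_card_filter_not, Finset.card_range]
  have hBc : (B.card : ℝ) ≤ 2 * μ := by
    have h1 : (B.card : ℝ) * (1 / μ) ≤ ∑ i ∈ B, w i := by
      rw [← nsmul_eq_mul]
      apply Finset.card_nsmul_le_sum
      intro i hi
      exact (not_le.1 (Finset.mem_filter.1 hi).2).le
    have h2 : ∑ i ∈ B, w i ≤ ∑ i ∈ Finset.range k, w i := by
      apply Finset.sum_le_sum_of_subset_of_nonneg (Finset.filter_subset _ _)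
      intro i hi _
      exact (hwpos i (Finset.mem_range.1 hi)).le
    have h3 : (B.card : ℝ) * (1 / μ) ≤ 2 := by linarith
    rw [mul_one_div, div_le_iff₀ hμ] at h3
    exact h3
  have hcr : ∀ i < k, ∀ j < k,
      (x i / X / w i - x j / X / w j) * (w i * w j * (X * Y)) = x i * y j - y i * x j := by
    intro i hi j hj
    have e1 := (hwpos i hi).ne'
    have e2 := (hwpos j hj).ne'
    have e3 : (x i / X / w i - x j / X / w j) * (w i * w j * (X * Y))
        = (x i / X * w j - x j / X * w i) * (X * Y) := by
      field_simp
    rw [e3, hw]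
    field_simp
    ring
  have hAc : (A.card : ℝ) ≤ 1 / (1 / (3 / 2 * μ)) + 1 := by
    apply card_le_of_separated A (fun i => x i / X / w i) _ (by positivity)
    · intro i hi
      have hik := Finset.mem_range.1 (Finset.mem_filter.1 hi).1
      exact div_nonneg (div_nonneg (hx i hik).le hX.le) (hwpos i hik).le
    · intro i hi
      have hik := Finset.mem_range.1 (Finset.mem_filter.1 hi).1
      rw [div_le_one (hwpos i hik)]
      have := div_pos (hy i hik) hY
      simp only [hw]; linarith
    · intro i hi j hj hij
      have hik := Finset.mem_range.1 (Finset.mem_filter.1 hi).1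
      have hjk := Finset.mem_range.1 (Finset.mem_filter.1 hj).1
      have hiw := (Finset.mem_filter.1 hi).2
      have hjw := (Finset.mem_filter.1 hj).2
      have hDc : D ≤ |x i * y j - y i * x j| := by
        rcases lt_or_gt_of_ne hij with h | h
        · have := hcross i j h hjk
          rw [abs_sub_comm]
          exact this.trans (le_abs_self _)
        · have := hcross j i h hik
          refine le_trans ?_ (le_abs_self _)
          linarith
      have hWp : 0 < w i * w j * (X * Y) :=
        mul_pos (mul_pos (hwpos i hik) (hwpos j hjk)) (mul_pos hX hY)
      rw [← hcr i hik j hjk, abs_mul, abs_of_pos hWp] at hDc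
      have hW : w i * w j * (X * Y) ≤ 3 / 2 * μ * D := by
        calc w i * w j * (X * Y) ≤ (1 / μ) * (1 / μ) * (3 / 2 * m * D) := by
              gcongr
              exact (hwpos j hjk).le
          _ = 3 / 2 * μ * D := by
              rw [← hμm]; field_simp
      have h4 : D ≤ |x i / X / w i - x j / X / w j| * (3 / 2 * μ * D) :=
        hDc.trans (mul_le_mul_of_nonneg_left hW (abs_nonneg _))
      rw [div_le_iff₀ (by positivity)]
      have h5 : 1 * D ≤ (|x i / X / w i - x j / X / w j| * (3 / 2 * μ)) * D := by
        linarith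
      exact le_of_mul_le_mul_right h5 hD
  rw [one_div_one_div] at hAc
  have : (k : ℝ) = A.card + B.card := by exact_mod_cast hAB.symm
  linarith

/-- Enumeration of a finite planar set by increasing first coordinate. -/
lemma exists_chain (G : Finset (ℝ × ℝ)) (k : ℕ) (hk : G.card = k + 1)
    (hinj : ∀ v ∈ G, ∀ w ∈ G, v.1 = w.1 → v = w) :
    ∃ v : ℕ → ℝ × ℝ, (∀ i ≤ k, v i ∈ G) ∧
      ∀ i j, i < j → j ≤ k → (v i).1 < (v j).1 := by
  classical
  have hc : (G.image Prod.fst).card = k + 1 := by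
    rw [Finset.card_image_of_injOn, hk]
    exact fun v hv w hw h => hinj v hv w hw h
  set e := (G.image Prod.fst).orderEmbOfFin hc
  have hex : ∀ i : Fin (k + 1), ∃ v ∈ G, v.1 = e i := fun i =>
    Finset.mem_image.1 (Finset.orderEmbOfFin_mem (G.image Prod.fst) hc i)
  choose f hf hfe using hex
  refine ⟨fun i => f (Fin.ofNat (k + 1) i), fun i _ => hf _, ?_⟩
  intro i j hij hj
  simp only [hfe]
  apply e.strictMono
  rw [Fin.lt_def]
  simp only [Fin.ofNat]
  rwa [Nat.mod_eq_of_lt (by omega), Nat.mod_eq_of_lt (by omega)]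

/-! ### Vertex configurations in asymptotic coordinates -/

/-- The properties of a finite set of vertices of the hull, in the coordinates `(S, T)` given by the
asymptotes, that the count uses: the points lie on or beyond `S T = N` in the open first quadrant
but not far beyond it, their coordinates differ by integers, they form a strictly decreasing and
strictly convex chain, and the cross products of their differences are multiples of `D`. -/
structure IsVertexConfig (D N : ℝ) (G : Finset (ℝ × ℝ)) : Prop where
  pos : ∀ v ∈ G, 0 < v.1 ∧ 0 < v.2 ∧ N ≤ v.1 * v.2
  near_fst : ∀ v ∈ G, v.1 * v.2 < N + D * v.1
  near_snd : ∀ v ∈ G, v.1 * v.2 < N + D * v.2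
  int_fst : ∀ v ∈ G, ∀ w ∈ G, ∃ k : ℤ, v.1 - w.1 = k
  int_snd : ∀ v ∈ G, ∀ w ∈ G, ∃ k : ℤ, v.2 - w.2 = k
  anti : ∀ v ∈ G, ∀ w ∈ G, v ≠ w → v.1 ≤ w.1 → w.2 < v.2
  convex : ∀ u ∈ G, ∀ v ∈ G, ∀ w ∈ G, u.1 < v.1 → v.1 < w.1 →
    (v.1 - u.1) * (v.2 - w.2) < (u.2 - v.2) * (w.1 - v.1)
  cross : ∀ u ∈ G, ∀ v ∈ G, ∀ w ∈ G, ∀ z ∈ G, ∃ k : ℤ,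
    (v.1 - u.1) * (z.2 - w.2) - (v.2 - u.2) * (z.1 - w.1) = D * k

namespace IsVertexConfig

variable {D N : ℝ} {G : Finset (ℝ × ℝ)}

lemma mono (h : IsVertexConfig D N G) {G' : Finset (ℝ × ℝ)} (hs : G' ⊆ G) :
    IsVertexConfig D N G' where
  pos v hv := h.pos v (hs hv)
  near_fst v hv := h.near_fst v (hs hv)
  near_snd v hv := h.near_snd v (hs hv)
  int_fst v hv w hw := h.int_fst v (hs hv) w (hs hw)
  int_snd v hv w hw := h.int_snd v (hs hv) w (hs hw)
  anti v hv w hw := h.anti v (hs hv) w (hs hw)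
  convex u hu v hv w hw := h.convex u (hs hu) v (hs hv) w (hs hw)
  cross u hu v hv w hw z hz := h.cross u (hs hu) v (hs hv) w (hs hw) z (hs hz)

lemma eq_of_fst_eq (h : IsVertexConfig D N G) {v w : ℝ × ℝ} (hv : v ∈ G) (hw : w ∈ G)
    (he : v.1 = w.1) : v = w := by
  by_contra hne
  have h1 := h.anti v hv w hw hne he.le
  have h2 := h.anti w hw v hv (Ne.symm hne) he.ge
  linarith

lemma fst_lt (h : IsVertexConfig D N G) {v w : ℝ × ℝ} (hv : v ∈ G) (hw : w ∈ G)
    (hlt : v.2 < w.2) : w.1 < v.1 := by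
  by_contra hle
  have hne : v ≠ w := by rintro rfl; exact lt_irrefl _ hlt
  have := h.anti v hv w hw hne (not_lt.1 hle)
  linarith

lemma swap (h : IsVertexConfig D N G) : IsVertexConfig D N (G.image Prod.swap) where
  pos := by
    simp only [Finset.forall_mem_image, Prod.fst_swap, Prod.snd_swap]
    intro v hv
    obtain ⟨h1, h2, h3⟩ := h.pos v hv
    exact ⟨h2, h1, by linarith⟩
  near_fst := by
    simp only [Finset.forall_mem_image, Prod.fst_swap, Prod.snd_swap]
    intro v hv
    linarith [h.near_snd v hv]
  near_snd := by
    simp only [Finset.forall_mem_image, Prod.fst_swap, Prod.snd_swap]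
    intro v hv
    linarith [h.near_fst v hv]
  int_fst := by
    simp only [Finset.forall_mem_image, Prod.fst_swap]
    exact h.int_snd
  int_snd := by
    simp only [Finset.forall_mem_image, Prod.snd_swap]
    exact h.int_fst
  anti := by
    simp only [Finset.forall_mem_image, Prod.fst_swap, Prod.snd_swap]
    intro v hv w hw hne hle
    have hne' : v ≠ w := fun e => hne (by rw [e])
    by_contra hlt
    have := h.anti v hv w hw hne' (not_lt.1 hlt)
    linarith
  convex := by
    simp only [Finset.forall_mem_image, Prod.fst_swap, Prod.snd_swap]
    intro u hu v hv w hw h1 h2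
    have := h.convex w hw v hv u hu (h.fst_lt hv hw h2) (h.fst_lt hu hv h1)
    linarith
  cross := by
    simp only [Finset.forall_mem_image, Prod.fst_swap, Prod.snd_swap]
    intro u hu v hv w hw z hz
    obtain ⟨k, hk⟩ := h.cross u hu v hv w hw z hz
    refine ⟨-k, ?_⟩
    push_cast
    linarith

/-- Vertices with first coordinate in one dyadic interval `[σ, 2σ)`. -/
lemma card_block_le (h : IsVertexConfig D N G) {m μ σ : ℝ} (hD : 0 < D) (hN : 0 < N)
    (hμ : 0 < μ) (hμm : μ ^ 3 = m) (hNm : N ≤ m * D) (hσ : 0 < σ) (hσm : σ ≤ m)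
    (hlo : ∀ v ∈ G, σ ≤ v.1) (hhi : ∀ v ∈ G, v.1 < 2 * σ) :
    (G.card : ℝ) ≤ 2 + 7 / 2 * μ := by
  rcases Nat.eq_zero_or_pos G.card with h0 | h0
  · rw [h0]; push_cast; positivity
  obtain ⟨k, hk⟩ : ∃ k, G.card = k + 1 := ⟨G.card - 1, by omega⟩
  obtain ⟨v, hvG, hvlt⟩ := exists_chain G k hk (fun v hv w hw => h.eq_of_fst_eq hv hw)
  have hvlt2 : ∀ i j, i < j → j ≤ k → (v j).2 < (v i).2 := by
    intro i j hij hj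
    have hlt := hvlt i j hij hj
    exact h.anti _ (hvG i (by omega)) _ (hvG j hj) (fun e => by rw [e] at hlt; exact lt_irrefl _ hlt)
      hlt.le
  have hkk : (k : ℝ) ≤ 1 + 7 / 2 * μ := by
    apply card_edges_le k (fun i => (v (i + 1)).1 - (v i).1) (fun i => (v i).2 - (v (i + 1)).2)
      σ (D + N / (2 * σ)) D m μ hσ (by positivity) hD hμ hμm
    · intro i hi
      exact sub_pos.2 (hvlt i (i + 1) (by omega) (by omega))
    · intro i hi
      exact sub_pos.2 (hvlt2 i (i + 1) (by omega) (by omega))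
    · intro i j hij hj
      have gi := hvG i (by omega)
      have gi' := hvG (i + 1) (by omega)
      have gj := hvG j (by omega)
      have gj' := hvG (j + 1) (by omega)
      have xi := hvlt i (i + 1) (by omega) (by omega)
      have xj := hvlt j (j + 1) (by omega) (by omega)
      have hpos : 0 < ((v i).2 - (v (i + 1)).2) * ((v (j + 1)).1 - (v j).1)
          - ((v (i + 1)).1 - (v i).1) * ((v j).2 - (v (j + 1)).2) := by
        -- for non-adjacent edges, compare both slopes with the one from `v (i + 1)` to `v j`
        rcases Nat.lt_or_ge (i + 1) j with hlt | hge
        · have m1 := hvlt (i + 1) j hlt (by omega)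
          have c1 := h.convex _ gi _ gi' _ gj xi m1
          have c2 := h.convex _ gi' _ gj _ gj' m1 xj
          have d1 := mul_lt_mul_of_pos_right c1 (sub_pos.2 xj)
          have d2 := mul_lt_mul_of_pos_left c2 (sub_pos.2 xi)
          have d3 : 0 < (((v i).2 - (v (i + 1)).2) * ((v (j + 1)).1 - (v j).1)
            - ((v (i + 1)).1 - (v i).1) * ((v j).2 - (v (j + 1)).2)) *
              ((v j).1 - (v (i + 1)).1) := by linarith
          exact pos_of_mul_pos_left d3 (sub_pos.2 m1).le
        · obtain rfl : j = i + 1 := by omega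
          have c1 := h.convex _ gi _ gi' _ gj' xi xj
          linarith
      obtain ⟨t, ht⟩ := h.cross _ gi _ gi' _ gj _ gj'
      have e : ((v i).2 - (v (i + 1)).2) * ((v (j + 1)).1 - (v j).1)
          - ((v (i + 1)).1 - (v i).1) * ((v j).2 - (v (j + 1)).2) = D * t := by
        rw [← ht]; ring
      show D ≤ ((v i).2 - (v (i + 1)).2) * ((v (j + 1)).1 - (v j).1)
          - ((v (i + 1)).1 - (v i).1) * ((v j).2 - (v (j + 1)).2)
      rw [e] at hpos ⊢
      have ht0 : (0 : ℝ) < t := pos_of_mul_pos_right hpos hD.le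
      have ht1 : (1 : ℝ) ≤ t := by
        have : (0 : ℤ) < t := by exact_mod_cast ht0
        exact_mod_cast this
      nlinarith
    · rw [Finset.sum_range_sub (fun i => (v i).1)]
      have := hlo _ (hvG 0 (by omega))
      have := hhi _ (hvG k le_rfl)
      linarith
    · rw [Finset.sum_range_sub' (fun i => (v i).2)]
      have a1 := hlo _ (hvG 0 (by omega))
      have a2 := hhi _ (hvG k le_rfl)
      obtain ⟨b1, b2, b3⟩ := h.pos _ (hvG k le_rfl)
      obtain ⟨c1, c2, c3⟩ := h.pos _ (hvG 0 (by omega))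
      have c4 := h.near_fst _ (hvG 0 (by omega))
      have d1 : (v 0).2 ≤ D + N / σ := by
        have : (v 0).2 - D ≤ N / (v 0).1 := by
          rw [le_div_iff₀ c1]; linarith
        have : N / (v 0).1 ≤ N / σ := by gcongr
        linarith
      have d2 : N / (2 * σ) ≤ (v k).2 := by
        have : N / (v k).1 ≤ (v k).2 := by
          rw [div_le_iff₀ b1]; linarith
        have : N / (2 * σ) ≤ N / (v k).1 := by gcongr
        linarith
      have d3 : N / σ = N / (2 * σ) + N / (2 * σ) := by field_simp; ring
      linarith
    · have : σ * (D + N / (2 * σ)) = σ * D + N / 2 := by field_simp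
      rw [this]
      nlinarith
  rw [hk]; push_cast; linarith

/-- Vertices on one side of the diagonal. They have first coordinate below `m`, which limits the
number of dyadic intervals. -/
lemma card_half_le (h : IsVertexConfig D N G) {m μ : ℝ} (hD : 0 < D) (hN : 0 < N)
    (hμ : 0 < μ) (hμm : μ ^ 3 = m) (hNm : N ≤ m * D) (hDm : 2 * D ≤ m) (hm : 1 ≤ m)
    (hlo : ∀ v ∈ G, 1 ≤ v.1) (hle : ∀ v ∈ G, v.1 ≤ v.2) :
    (G.card : ℝ) ≤ (Real.logb 2 m + 1) * (2 + 7 / 2 * μ) := by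
  classical
  have hlt : ∀ v ∈ G, v.1 < m := by
    intro v hv
    by_contra hge
    have a1 := hlo v hv
    have a2 := hle v hv
    have a3 := h.near_fst v hv
    nlinarith
  have hmaps : ∀ v ∈ G, ⌊Real.logb 2 v.1⌋₊ ∈ Finset.range (⌊Real.logb 2 m⌋₊ + 1) := by
    intro v hv
    rw [Finset.mem_range, Nat.lt_succ_iff]
    apply Nat.floor_mono
    have := hlo v hv
    exact Real.logb_le_logb_of_le (by norm_num) (by linarith) (hlt v hv).le
  rw [Finset.card_eq_sum_card_fiberwise hmaps]
  push_cast
  have hb : ∀ i ∈ Finset.range (⌊Real.logb 2 m⌋₊ + 1),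
      ((G.filter (fun v => ⌊Real.logb 2 v.1⌋₊ = i)).card : ℝ) ≤ 2 + 7 / 2 * μ := by
    intro i hi
    rcases (G.filter (fun v => ⌊Real.logb 2 v.1⌋₊ = i)).eq_empty_or_nonempty with he | he
    · rw [he]; simp; positivity
    have key : ∀ v ∈ G.filter (fun v => ⌊Real.logb 2 v.1⌋₊ = i),
        (2 : ℝ) ^ i ≤ v.1 ∧ v.1 < 2 * 2 ^ i := by
      intro v hv
      obtain ⟨hv, hvi⟩ := Finset.mem_filter.1 hv
      have h1 := hlo v hv
      have h1' : 0 < v.1 := by linarith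
      have hl0 : 0 ≤ Real.logb 2 v.1 := Real.logb_nonneg (by norm_num) h1
      have f1 := Nat.floor_le hl0
      have f2 := Nat.lt_floor_add_one (Real.logb 2 v.1)
      rw [hvi] at f1 f2
      rw [Real.le_logb_iff_rpow_le (by norm_num) h1', Real.rpow_natCast] at f1
      rw [Real.logb_lt_iff_lt_rpow (by norm_num) h1', Real.rpow_add (by norm_num),
        Real.rpow_natCast, Real.rpow_one] at f2
      exact ⟨f1, by linarith⟩
    have hσm : (2 : ℝ) ^ i ≤ m := by
      obtain ⟨v, hv⟩ := he
      exact (key v hv).1.trans (hlt v (Finset.mem_filter.1 hv).1).le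
    exact (h.mono (Finset.filter_subset _ _)).card_block_le hD hN hμ hμm hNm
      (σ := 2 ^ i) (by positivity) hσm (fun v hv => (key v hv).1) (fun v hv => (key v hv).2)
  refine (Finset.sum_le_sum hb).trans ?_
  rw [Finset.sum_const, Finset.card_range, nsmul_eq_mul]
  have := Nat.floor_le (Real.logb_nonneg (b := 2) (by norm_num) hm)
  push_cast
  gcongr

/-- The first coordinates are distinct, positive and congruent modulo `1`. -/
lemma card_fst_lt_one (h : IsVertexConfig D N G) :
    (G.filter (fun v => v.1 < 1)).card ≤ 1 := by
  rw [Finset.card_le_one]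
  intro v hv w hw
  obtain ⟨hv, hv1⟩ := Finset.mem_filter.1 hv
  obtain ⟨hw, hw1⟩ := Finset.mem_filter.1 hw
  apply h.eq_of_fst_eq hv hw
  obtain ⟨k, hk⟩ := h.int_fst v hv w hw
  have hv0 := (h.pos v hv).1
  have hw0 := (h.pos w hw).1
  have k1 : (k : ℝ) < 1 := by linarith
  have k2 : (-1 : ℝ) < k := by linarith
  have k1' : k < 1 := by exact_mod_cast k1
  have k2' : -1 < k := by exact_mod_cast k2
  have : k = 0 := by omega
  rw [this] at hk
  push_cast at hk
  linarith

lemma card_le (h : IsVertexConfig D N G) {m μ : ℝ} (hD : 0 < D) (hN : 0 < N)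
    (hμ : 0 < μ) (hμm : μ ^ 3 = m) (hNm : N ≤ m * D) (hDm : 2 * D ≤ m) (hm : 1 ≤ m) :
    (G.card : ℝ) ≤ 2 * ((Real.logb 2 m + 1) * (2 + 7 / 2 * μ)) + 2 := by
  classical
  set A := G.filter (fun v => v.1 < 1)
  set B := G.filter (fun v => v.2 < 1)
  set P := G.filter (fun v => 1 ≤ v.1 ∧ v.1 ≤ v.2)
  set R := G.filter (fun v => 1 ≤ v.2 ∧ v.2 ≤ v.1)
  have hsw : ∀ G' : Finset (ℝ × ℝ), (G'.image Prod.swap).card = G'.card := fun G' =>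
    Finset.card_image_of_injective _ Prod.swap_injective
  have hA : (A.card : ℝ) ≤ 1 := by exact_mod_cast h.card_fst_lt_one
  have hB : (B.card : ℝ) ≤ 1 := by
    have := h.swap.card_fst_lt_one
    rw [Finset.filter_image, hsw] at this
    exact_mod_cast this
  have hP : (P.card : ℝ) ≤ (Real.logb 2 m + 1) * (2 + 7 / 2 * μ) :=
    (h.mono (Finset.filter_subset _ _)).card_half_le hD hN hμ hμm hNm hDm hm
      (fun v hv => (Finset.mem_filter.1 hv).2.1) (fun v hv => (Finset.mem_filter.1 hv).2.2)
  have hR : (R.card : ℝ) ≤ (Real.logb 2 m + 1) * (2 + 7 / 2 * μ) := by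
    have hc : IsVertexConfig D N (R.image Prod.swap) := (h.mono (Finset.filter_subset _ _)).swap
    rw [← hsw R]
    apply hc.card_half_le hD hN hμ hμm hNm hDm hm
    · simp only [Finset.forall_mem_image, Prod.fst_swap]
      exact fun v hv => (Finset.mem_filter.1 hv).2.1
    · simp only [Finset.forall_mem_image, Prod.fst_swap, Prod.snd_swap]
      exact fun v hv => (Finset.mem_filter.1 hv).2.2
  have hsub : G ⊆ (A ∪ B) ∪ (P ∪ R) := by
    intro v hv
    simp only [A, B, P, R, Finset.mem_union, Finset.mem_filter, hv, true_and]
    by_cases h1 : v.1 < 1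
    · tauto
    by_cases h2 : v.2 < 1
    · tauto
    rcases le_total v.1 v.2 with h3 | h3
    · exact Or.inr (Or.inl ⟨not_lt.1 h1, h3⟩)
    · exact Or.inr (Or.inr ⟨not_lt.1 h2, h3⟩)
  have hc : G.card ≤ (A.card + B.card) + (P.card + R.card) :=
    (Finset.card_le_card hsub).trans ((Finset.card_union_le _ _).trans
      (add_le_add (Finset.card_union_le _ _) (Finset.card_union_le _ _)))
  have hc' : (G.card : ℝ) ≤ (A.card + B.card) + (P.card + R.card) := by exact_mod_cast hc
  linarith

end IsVertexConfig

lemma numeric_bound {m : ℝ} (hm : 2 ≤ m) :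
    2 * ((Real.logb 2 m + 1) * (2 + 7 / 2 * m ^ ((1 : ℝ) / 3))) + 2 ≤
      2 ^ ((7 : ℝ) / 3) * Real.pi ^ ((2 : ℝ) / 3) * m ^ ((1 : ℝ) / 3) *
        (Real.logb 2 m + 2) := by
  have cube : ∀ t : ℝ, 0 ≤ t → ∀ e : ℝ, (t ^ (e / 3)) ^ 3 = t ^ e := by
    intro t ht e
    rw [← Real.rpow_natCast, ← Real.rpow_mul ht]
    congr 1; push_cast; ring
  have h1 : (5 : ℝ) ≤ 2 ^ ((7 : ℝ) / 3) := by
    refine le_of_pow_le_pow_left₀ (n := 3) (by norm_num) (by positivity) ?_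
    rw [cube 2 (by norm_num) 7]
    norm_num
  have h2 : (2.04 : ℝ) ≤ Real.pi ^ ((2 : ℝ) / 3) := by
    refine le_of_pow_le_pow_left₀ (n := 3) (by norm_num) (by positivity) ?_
    rw [cube _ Real.pi_pos.le 2, Real.rpow_two]
    nlinarith [Real.pi_gt_three]
  have h3 : (1.25 : ℝ) ≤ m ^ ((1 : ℝ) / 3) := by
    refine le_of_pow_le_pow_left₀ (n := 3) (by norm_num) (by positivity) ?_
    rw [cube _ (by linarith) 1, Real.rpow_one]
    norm_num; linarith
  have h4 : 0 ≤ Real.logb 2 m := Real.logb_nonneg (by norm_num) (by linarith)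
  have h5 : (10.2 : ℝ) ≤ 2 ^ ((7 : ℝ) / 3) * Real.pi ^ ((2 : ℝ) / 3) := by
    calc (10.2 : ℝ) = 5 * 2.04 := by norm_num
      _ ≤ _ := by gcongr
  set μ := m ^ ((1 : ℝ) / 3)
  set L := Real.logb 2 m
  calc 2 * ((L + 1) * (2 + 7 / 2 * μ)) + 2 ≤ 10.2 * μ * (L + 2) := by nlinarith
    _ ≤ _ := by gcongr

/-! ### Factorization of the quadratic form -/

/-- A binary quadratic form over `ℤ` with square discriminant factors over `ℤ`. -/
lemma exists_int_factorization (a b c Δ : ℤ) (h : b ^ 2 - 4 * a * c = Δ ^ 2) :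
    ∃ p q r s : ℤ, a = p * r ∧ b = p * s + q * r ∧ c = q * s ∧ p * s - q * r = Δ := by
  suffices hs : ∃ p q r s : ℤ, a = p * r ∧ b = p * s + q * r ∧ c = q * s by
    obtain ⟨p, q, r, s, h1, h2, h3⟩ := hs
    have hsq : (p * s - q * r) ^ 2 = Δ ^ 2 := by
      rw [← h, h1, h2, h3]; ring
    rcases sq_eq_sq_iff_eq_or_eq_neg.1 hsq with e | e
    · exact ⟨p, q, r, s, h1, h2, h3, e⟩
    · exact ⟨r, s, p, q, by rw [h1]; ring, by rw [h2]; ring, by rw [h3]; ring, by linarith⟩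
  -- `b` and `Δ` have the same parity
  obtain ⟨β, hβ⟩ : ∃ β, b + Δ = 2 * β := by
    have he : Even ((b + Δ) * (b - Δ)) := ⟨2 * a * c, by linarith⟩
    rcases Int.even_mul.1 he with e | e
    · obtain ⟨t, ht⟩ := e; exact ⟨t, by linarith⟩
    · obtain ⟨t, ht⟩ := e; exact ⟨t + Δ, by linarith⟩
  obtain ⟨γ, hγ⟩ : ∃ γ, γ = b - β := ⟨_, rfl⟩
  -- now `b = β + γ`, and dividing `a` and `β` by their gcd splits `β γ = a c` into four factors
  have hprod : β * γ = a * c := by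
    have : 4 * (β * γ) = 4 * (a * c) := by
      have e1 : 2 * γ = b - Δ := by rw [hγ]; linarith
      calc 4 * (β * γ) = (2 * β) * (2 * γ) := by ring
        _ = (b + Δ) * (b - Δ) := by rw [← hβ, e1]
        _ = 4 * (a * c) := by linarith
    linarith
  by_cases h0 : a = 0
  · exact ⟨0, 1, b, c, by simp [h0], by ring, by ring⟩
  have hg : 0 < Int.gcd a β := by
    rw [Int.gcd_pos_iff]; exact Or.inl h0
  obtain ⟨p, q, hcop, ha, hb⟩ := Int.exists_gcd_one hg
  set g : ℤ := (Int.gcd a β : ℤ)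
  have hg' : g ≠ 0 := Int.natCast_ne_zero.2 hg.ne'
  have hqc : q * γ = p * c := by
    have : g * (q * γ) = g * (p * c) := by
      calc g * (q * γ) = (q * g) * γ := by ring
        _ = β * γ := by rw [← hb]
        _ = (p * g) * c := by rw [hprod, ← ha]
        _ = g * (p * c) := by ring
    exact mul_left_cancel₀ hg' this
  have hpc : IsCoprime p q := Int.isCoprime_iff_gcd_eq_one.2 hcop
  obtain ⟨s, hs⟩ : p ∣ γ := hpc.dvd_of_dvd_mul_left ⟨c, hqc⟩
  have hbs : b = p * s + q * g := by rw [← hb, ← hs, hγ]; ring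
  refine ⟨p, q, g, s, ha, hbs, ?_⟩
  have hp : p ≠ 0 := by
    rintro rfl
    exact h0 (by rw [ha, zero_mul])
  apply mul_left_cancel₀ hp
  rw [← hqc, hs]; ring

/-! ### The convex side of the hyperbola and the hull of its integer points -/

/-- The affine function `p(x-x₀) + q(y-y₀)` on the plane. -/
def affForm (p q : ℤ) (x₀ y₀ : ℝ) (z : ℝ × ℝ) : ℝ := p * (z.1 - x₀) + q * (z.2 - y₀)

lemma continuous_affForm (p q : ℤ) (x₀ y₀ : ℝ) : Continuous (affForm p q x₀ y₀) := by
  unfold affForm; fun_prop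

lemma affForm_combo (p q : ℤ) (x₀ y₀ : ℝ) (z w : ℝ × ℝ) (α β : ℝ) (h : α + β = 1) :
    affForm p q x₀ y₀ (α • z + β • w) = α * affForm p q x₀ y₀ z + β * affForm p q x₀ y₀ w := by
  obtain rfl : α = 1 - β := by linarith
  simp only [affForm, Prod.fst_add, Prod.snd_add, Prod.smul_fst, Prod.smul_snd, smul_eq_mul]
  ring

/-- The closed convex region `{S > 0, S T ≥ N}`, for the affine functions `S` and `T` given by
`(p, q)` and `(r, s)`; for `N > 0` also `T` is positive on it. -/
def convexSide (p q r s : ℤ) (x₀ y₀ N : ℝ) : Set (ℝ × ℝ) :=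
  {z | 0 < affForm p q x₀ y₀ z ∧ N ≤ affForm p q x₀ y₀ z * affForm r s x₀ y₀ z}

section Hull

variable {p q r s D : ℤ} {x₀ y₀ N : ℝ}

local notation "S" => affForm p q x₀ y₀
local notation "T" => affForm r s x₀ y₀
local notation "P" => convexHull ℝ (convexSide p q r s x₀ y₀ N ∩ intLattice)

/-- Integer vectors along which `S` and `T` do not decrease are recession directions of the hull. -/
lemma hull_add_smul (hN : 0 < N) {i j : ℤ} (h1 : 0 ≤ p * i + q * j) (h2 : 0 ≤ r * i + s * j)
    {z : ℝ × ℝ} (hz : z ∈ P) {α : ℝ} (hα : 0 ≤ α) : z + α • ((i : ℝ), (j : ℝ)) ∈ P := by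
  have h1' : (0 : ℝ) ≤ p * i + q * j := by exact_mod_cast h1
  have h2' : (0 : ℝ) ≤ r * i + s * j := by exact_mod_cast h2
  -- integer multiples of `(i, j)` translate the set of lattice points into itself
  have hint : ∀ k : ℕ, z + (k : ℝ) • ((i : ℝ), (j : ℝ)) ∈ P := by
    intro k
    have hsub : convexSide p q r s x₀ y₀ N ∩ intLattice ⊆
        (fun w => w + (k : ℝ) • ((i : ℝ), (j : ℝ))) ⁻¹' P := by
      rintro w ⟨⟨hw1, hw2⟩, a, b, rfl⟩
      apply subset_convexHull
      have hT : 0 < T ((a : ℝ), (b : ℝ)) := pos_of_mul_pos_right (hN.trans_le hw2) hw1.le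
      have e1 : S (((a : ℝ), (b : ℝ)) + (k : ℝ) • ((i : ℝ), (j : ℝ)))
          = S ((a : ℝ), (b : ℝ)) + k * (p * i + q * j) := by
        simp [affForm]; ring
      have e2 : T (((a : ℝ), (b : ℝ)) + (k : ℝ) • ((i : ℝ), (j : ℝ)))
          = T ((a : ℝ), (b : ℝ)) + k * (r * i + s * j) := by
        simp [affForm]; ring
      have f1 : (0 : ℝ) ≤ k * (p * i + q * j) := by positivity
      have f2 : (0 : ℝ) ≤ k * (r * i + s * j) := by positivity
      refine ⟨⟨?_, ?_⟩, a + k * i, b + k * j, ?_⟩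
      · rw [e1]; linarith
      · rw [e1, e2]
        refine hw2.trans ?_
        gcongr <;> linarith
      · simp
    have hconv : Convex ℝ ((fun w : ℝ × ℝ => w + (k : ℝ) • ((i : ℝ), (j : ℝ))) ⁻¹' P) :=
      (convex_convexHull ℝ _).translate_preimage_left _
    exact convexHull_min hsub hconv hz
  obtain ⟨k, hk⟩ := exists_nat_gt α
  have hk0 : (0 : ℝ) < k := hα.trans_lt hk
  have := (convex_convexHull ℝ _).add_smul_mem hz (hint k) (t := α / k)
    ⟨by positivity, (div_le_one hk0).2 hk.le⟩
  rwa [smul_smul, div_mul_cancel₀ _ hk0.ne'] at this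

/-- The hull is closed under increasing `S` and `T`: the integer vectors `(s, -r)` and `(-q, p)` have
`(S, T)`-increments `(D, 0)` and `(0, D)`. -/
lemma hull_up (hN : 0 < N) (hD : 0 < D) (hdet : p * s - q * r = D)
    {z w : ℝ × ℝ} (hz : z ∈ P) (h1 : S z ≤ S w) (h2 : T z ≤ T w) : w ∈ P := by
  have hD' : (0 : ℝ) < D := by exact_mod_cast hD
  have hdet' : (p : ℝ) * s - q * r = D := by exact_mod_cast hdet
  have a1 := hull_add_smul hN (i := s) (j := -r) (by linarith) (by linarith) hz
    (α := (S w - S z) / D) (div_nonneg (by linarith) hD'.le)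
  have a2 := hull_add_smul hN (i := -q) (j := p) (by linarith) (by linarith) a1
    (α := (T w - T z) / D) (div_nonneg (by linarith) hD'.le)
  convert a2 using 1
  ext
  · simp only [affForm, Prod.fst_add, Prod.smul_fst, smul_eq_mul]
    push_cast
    field_simp
    rw [← hdet']; ring
  · simp only [affForm, Prod.snd_add, Prod.smul_snd, smul_eq_mul]
    push_cast
    field_simp
    rw [← hdet']; ring

/-- Vertices are minimal in the hull for the coordinatewise order of `(S, T)`. -/
lemma eq_of_le_extreme (hN : 0 < N) (hD : 0 < D) (hdet : p * s - q * r = D)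
    {z w : ℝ × ℝ} (hz : z ∈ P) (hw : w ∈ Set.extremePoints ℝ P)
    (h1 : S z ≤ S w) (h2 : T z ≤ T w) : z = w := by
  -- `w` is the midpoint of `z` and `2w - z`
  have hmem : (2 : ℝ) • w - z ∈ P := by
    apply hull_up hN hD hdet (mem_extremePoints.1 hw).1
    · have : S ((2 : ℝ) • w - z) = 2 * S w - S z := by simp [affForm]; ring
      linarith
    · have : T ((2 : ℝ) • w - z) = 2 * T w - T z := by simp [affForm]; ring
      linarith
  refine ((mem_extremePoints.1 hw).2 z hz _ hmem ⟨1 / 2, 1 / 2, by norm_num, by norm_num,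
    by norm_num, ?_⟩).1
  module

lemma affForm_injective (hD : 0 < D) (hdet : p * s - q * r = D) {z w : ℝ × ℝ}
    (h1 : S z = S w) (h2 : T z = T w) : z = w := by
  have hD' : (0 : ℝ) < D := by exact_mod_cast hD
  have hdet' : (p : ℝ) * s - q * r = D := by exact_mod_cast hdet
  simp only [affForm] at h1 h2
  ext
  · apply mul_left_cancel₀ hD'.ne'
    rw [← hdet']
    linear_combination s * h1 - q * h2
  · apply mul_left_cancel₀ hD'.ne'
    rw [← hdet']
    linear_combination p * h2 - r * h1

/-- A vertex is not the midpoint of two other integer points of the region. -/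
lemma not_translates_mem {v : ℝ × ℝ} (hv : v ∈ Set.extremePoints ℝ P) {i j : ℤ}
    (hij : ((i : ℝ), (j : ℝ)) ≠ 0) (hadd : v + ((i : ℝ), (j : ℝ)) ∈ convexSide p q r s x₀ y₀ N)
    (hsub : v - ((i : ℝ), (j : ℝ)) ∈ convexSide p q r s x₀ y₀ N) : False := by
  obtain ⟨-, a, b, hab⟩ := extremePoints_convexHull_subset hv
  have m1 : v + ((i : ℝ), (j : ℝ)) ∈ P :=
    subset_convexHull ℝ _ ⟨hadd, a + i, b + j, by rw [hab]; simp⟩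
  have m2 : v - ((i : ℝ), (j : ℝ)) ∈ P :=
    subset_convexHull ℝ _ ⟨hsub, a - i, b - j, by rw [hab]; simp⟩
  have := ((mem_extremePoints.1 hv).2 _ m1 _ m2 ⟨1 / 2, 1 / 2, by norm_num, by norm_num,
    by norm_num, by module⟩).1
  exact hij (by simpa using this)

lemma isVertexConfig_image (hN : 0 < N) (hD : 0 < D) (hdet : p * s - q * r = D)
    (F : Finset (ℝ × ℝ)) (hF : ∀ v ∈ F, v ∈ Set.extremePoints ℝ P) :
    IsVertexConfig D N (F.image fun z => (S z, T z)) := by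
  have hD' : (0 : ℝ) < D := by exact_mod_cast hD
  have hdet' : (p : ℝ) * s - q * r = D := by exact_mod_cast hdet
  have hmem : ∀ v ∈ F, v ∈ convexSide p q r s x₀ y₀ N ∩ intLattice := fun v hv =>
    extremePoints_convexHull_subset (hF v hv)
  have hTpos : ∀ v ∈ F, 0 < T v := fun v hv =>
    pos_of_mul_pos_right (hN.trans_le (hmem v hv).1.2) (hmem v hv).1.1.le
  refine ⟨?_, ?_, ?_, ?_, ?_, ?_, ?_, ?_⟩ <;> simp only [Finset.forall_mem_image]
  · exact fun v hv => ⟨(hmem v hv).1.1, hTpos v hv, (hmem v hv).1.2⟩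
  · intro v hv
    by_contra hle
    have h0 := (hmem v hv).1.1
    have h1 := (hmem v hv).1.2
    have e1 : S (v + (((-q : ℤ) : ℝ), (p : ℝ))) = S v := by simp [affForm]; ring
    have e2 : T (v + (((-q : ℤ) : ℝ), (p : ℝ))) = T v + D := by
      rw [← hdet']; simp [affForm]; ring
    have e3 : S (v - (((-q : ℤ) : ℝ), (p : ℝ))) = S v := by simp [affForm]; ring
    have e4 : T (v - (((-q : ℤ) : ℝ), (p : ℝ))) = T v - D := by
      rw [← hdet']; simp [affForm]; ring
    refine not_translates_mem (hF v hv) (i := -q) (j := p) ?_ ⟨?_, ?_⟩ ⟨?_, ?_⟩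
    · intro h
      rw [h, add_zero] at e2
      linarith
    · rw [e1]; exact h0
    · rw [e1, e2]; nlinarith
    · rw [e3]; exact h0
    · rw [e3, e4]; nlinarith
  · intro v hv
    by_contra hle
    have h0 := (hmem v hv).1.1
    have hT := hTpos v hv
    have h1 := (hmem v hv).1.2
    have e1 : S (v + ((s : ℝ), ((-r : ℤ) : ℝ))) = S v + D := by
      rw [← hdet']; simp [affForm]; ring
    have e2 : T (v + ((s : ℝ), ((-r : ℤ) : ℝ))) = T v := by simp [affForm]; ring
    have e3 : S (v - ((s : ℝ), ((-r : ℤ) : ℝ))) = S v - D := by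
      rw [← hdet']; simp [affForm]; ring
    have e4 : T (v - ((s : ℝ), ((-r : ℤ) : ℝ))) = T v := by simp [affForm]; ring
    have h5 : N ≤ (S v - D) * T v := by nlinarith
    refine not_translates_mem (hF v hv) (i := s) (j := -r) ?_ ⟨?_, ?_⟩ ⟨?_, ?_⟩
    · intro h
      rw [h, add_zero] at e1
      linarith
    · rw [e1]; linarith
    · rw [e1, e2]; nlinarith
    · rw [e3]; exact pos_of_mul_pos_left (hN.trans_le h5) hT.le
    · rw [e3, e4]; exact h5
  · intro v hv w hw
    obtain ⟨-, a, b, rfl⟩ := hmem v hv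
    obtain ⟨-, a', b', rfl⟩ := hmem w hw
    exact ⟨p * (a - a') + q * (b - b'), by simp only [affForm]; push_cast; ring⟩
  · intro v hv w hw
    obtain ⟨-, a, b, rfl⟩ := hmem v hv
    obtain ⟨-, a', b', rfl⟩ := hmem w hw
    exact ⟨r * (a - a') + s * (b - b'), by simp only [affForm]; push_cast; ring⟩
  · intro v hv w hw hne hle
    by_contra hlt
    apply hne
    have := eq_of_le_extreme hN hD hdet (mem_extremePoints.1 (hF v hv)).1 (hF w hw) hle
      (not_lt.1 hlt)
    rw [this]
  · intro u hu v hv w hw h1 h2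
    by_contra hle
    have hd : 0 < S w - S u := by linarith
    -- the point of the segment from `u` to `w` with the same `S` as `v` would lie weakly below `v`
    set t : ℝ := (S v - S u) / (S w - S u) with ht
    have ht0 : 0 < t := div_pos (by linarith) hd
    have ht1 : t < 1 := (div_lt_one hd).2 (by linarith)
    have htm : t * (S w - S u) = S v - S u := div_mul_cancel₀ _ hd.ne'
    have hc : (1 - t) • u + t • w ∈ P := convex_convexHull ℝ _ (mem_extremePoints.1 (hF u hu)).1
      (mem_extremePoints.1 (hF w hw)).1 (by linarith) ht0.le (by ring)
    have hS : S ((1 - t) • u + t • w) = S v := by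
      rw [affForm_combo _ _ _ _ _ _ _ _ (by ring)]; linarith
    have hT : T ((1 - t) • u + t • w) ≤ T v := by
      rw [affForm_combo _ _ _ _ _ _ _ _ (by ring)]
      refine le_of_mul_le_mul_right ?_ hd
      have e : ((1 - t) * T u + t * T w) * (S w - S u)
          = T u * (S w - S u) + (t * (S w - S u)) * (T w - T u) := by ring
      rw [e, htm]
      linarith
    have heq := eq_of_le_extreme hN hD hdet hc (hF v hv) hS.le hT
    have := ((mem_extremePoints.1 (hF v hv)).2 u (mem_extremePoints.1 (hF u hu)).1 w
      (mem_extremePoints.1 (hF w hw)).1 ⟨1 - t, t, by linarith, ht0, by ring, heq⟩).1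
    rw [this] at h1
    exact lt_irrefl _ h1
  · intro u hu v hv w hw z hz
    obtain ⟨-, a, b, rfl⟩ := hmem u hu
    obtain ⟨-, a', b', rfl⟩ := hmem v hv
    obtain ⟨-, c, d, rfl⟩ := hmem w hw
    obtain ⟨-, c', d', rfl⟩ := hmem z hz
    refine ⟨(a' - a) * (d' - d) - (b' - b) * (c' - c), ?_⟩
    rw [← hdet']
    simp only [affForm]; push_cast; ring

end Hull

/-! ### The convex components of the complement -/

section Component

variable {p q r s D : ℤ} {x₀ y₀ N : ℝ}

local notation "S" => affForm p q x₀ y₀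
local notation "T" => affForm r s x₀ y₀

/-- The component between the two branches, `{S T < N}`, is star-shaped about the center but not
convex, so a convex component lies beyond one of the branches. -/
lemma lt_of_convex_component (hN : 0 < N) (hD : 0 < D) (hdet : p * s - q * r = D) {x : ℝ × ℝ}
    (hx : S x * T x ≠ N)
    (hconv : Convex ℝ (connectedComponentIn {z : ℝ × ℝ | S z * T z = N}ᶜ x)) :
    N < S x * T x := by
  by_contra hle
  have hlt : S x * T x < N := lt_of_le_of_ne (not_lt.1 hle) hx
  have hD' : (0 : ℝ) < D := by exact_mod_cast hD
  have hdet' : (p : ℝ) * s - q * r = D := by exact_mod_cast hdet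
  have c1 : S (x₀, y₀) = 0 := by simp [affForm]
  have c2 : T (x₀, y₀) = 0 := by simp [affForm]
  have hstar : StarConvex ℝ (x₀, y₀) {z : ℝ × ℝ | S z * T z < N} := by
    intro z hz α β hα hβ hαβ
    have hz' : S z * T z < N := hz
    simp only [Set.mem_ofPred_eq, affForm_combo _ _ _ _ _ _ _ _ hαβ, c1, c2]
    have hβ1 : β * β ≤ 1 := by nlinarith
    have hβ0 : 0 ≤ β * β := by positivity
    have : (α * 0 + β * S z) * (α * 0 + β * T z) = β * β * (S z * T z) := by ring
    rw [this]
    rcases le_or_gt (S z * T z) 0 with h | h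
    · exact (mul_nonpos_of_nonneg_of_nonpos hβ0 h).trans_lt hN
    · nlinarith
  have hpre : IsPreconnected {z : ℝ × ℝ | S z * T z < N} :=
    (hstar.isPathConnected
      (by simp only [Set.mem_ofPred_eq, c1, zero_mul]; exact hN)).isConnected.isPreconnected
  have hsub := hpre.subset_connectedComponentIn (x := x) (F := {z : ℝ × ℝ | S z * T z = N}ᶜ) hlt
    (fun z hz => ne_of_lt hz)
  -- two points on the asymptotes whose midpoint lies beyond the hyperbola
  set M : ℝ := 2 * (N + 1) / D
  have hM : M * D = 2 * (N + 1) := div_mul_cancel₀ _ hD'.ne'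
  set u : ℝ × ℝ := (x₀ + M * s, y₀ - M * r)
  set w : ℝ × ℝ := (x₀ - M * q, y₀ + M * p)
  have u1 : S u = 2 * (N + 1) := by rw [← hM, ← hdet']; simp only [affForm, u]; ring
  have u2 : T u = 0 := by simp only [affForm, u]; ring
  have w1 : S w = 0 := by simp only [affForm, w]; ring
  have w2 : T w = 2 * (N + 1) := by rw [← hM, ← hdet']; simp only [affForm, w]; ring
  have hu : u ∈ {z : ℝ × ℝ | S z * T z < N} := by
    simp only [Set.mem_ofPred_eq, u2, mul_zero]; exact hN
  have hw : w ∈ {z : ℝ × ℝ | S z * T z < N} := by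
    simp only [Set.mem_ofPred_eq, w1, zero_mul]; exact hN
  -- the segment from `u` to `w` meets the hyperbola
  set P := connectedComponentIn {z : ℝ × ℝ | S z * T z = N}ᶜ x
  have hseg : ∀ t : ℝ, t ∈ Set.Icc (0 : ℝ) 1 → (1 - t) • u + t • w ∈ P := fun t ht =>
    hconv (hsub hu) (hsub hw) (by linarith [ht.2]) ht.1 (by ring)
  have hf : ContinuousOn (fun t : ℝ => (1 - t) * t * (4 * (N + 1) ^ 2)) (Set.Icc 0 (1 / 2)) := by
    fun_prop
  have hmem : N ∈ Set.Icc ((fun t : ℝ => (1 - t) * t * (4 * (N + 1) ^ 2)) 0)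
      ((fun t : ℝ => (1 - t) * t * (4 * (N + 1) ^ 2)) (1 / 2)) := by
    constructor
    · simp; exact hN.le
    · simp only; nlinarith
  obtain ⟨t, ht, hteq⟩ := intermediate_value_Icc (by norm_num) hf hmem
  have h1 := connectedComponentIn_subset _ _ (hseg t ⟨ht.1, by linarith [ht.2]⟩)
  apply h1
  simp only [Set.mem_ofPred_eq, affForm_combo _ _ _ _ _ _ _ _ (show (1 - t) + t = 1 by ring),
    u1, u2, w1, w2]
  simp only at hteq
  linarith

lemma closure_component (hN : 0 < N) {x : ℝ × ℝ} (hx : N < S x * T x) (hxS : 0 < S x) :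
    closure (connectedComponentIn {z : ℝ × ℝ | S z * T z = N}ᶜ x)
      = convexSide p q r s x₀ y₀ N := by
  have cS := continuous_affForm p q x₀ y₀
  have cT := continuous_affForm r s x₀ y₀
  set U : Set (ℝ × ℝ) := {z | 0 < S z ∧ N < S z * T z} with hU
  have hUconv : Convex ℝ U := by
    rintro z ⟨hz1, hz2⟩ w ⟨hw1, hw2⟩ α β hα hβ hαβ
    have hz3 : 0 < T z := pos_of_mul_pos_right (hN.trans hz2) hz1.le
    have hw3 : 0 < T w := pos_of_mul_pos_right (hN.trans hw2) hw1.le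
    have hpos : 0 < α * S z + β * S w := by
      rcases hα.eq_or_lt with h | h
      · have : β = 1 := by linarith
        rw [← h, this]; linarith
      · have := mul_pos h hz1
        have := mul_nonneg hβ hw1.le
        linarith
    have hmix : 2 * N < S z * T w + S w * T z := by
      have hp : 0 < S z * T w + S w * T z := by positivity
      refine lt_of_pow_lt_pow_left₀ 2 hp.le ?_
      have h1 : N * N < (S z * T z) * (S w * T w) := mul_lt_mul'' hz2 hw2 hN.le hN.le
      nlinarith [sq_nonneg (S z * T w - S w * T z)]
    simp only [hU, Set.mem_ofPred_eq, affForm_combo _ _ _ _ _ _ _ _ hαβ]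
    refine ⟨hpos, ?_⟩
    have e : (α * S z + β * S w) * (α * T z + β * T w) - N
        = α * α * (S z * T z - N) + β * β * (S w * T w - N)
          + α * β * (S z * T w + S w * T z - 2 * N) := by
      obtain rfl : α = 1 - β := by linarith
      ring
    have g1 : 0 ≤ α * α * (S z * T z - N) := mul_nonneg (mul_self_nonneg _) (by linarith)
    have g2 : 0 ≤ β * β * (S w * T w - N) := mul_nonneg (mul_self_nonneg _) (by linarith)
    have g3 : 0 ≤ α * β * (S z * T w + S w * T z - 2 * N) :=
      mul_nonneg (mul_nonneg hα hβ) (by linarith)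
    rcases hα.eq_or_lt with h | h
    · have : β = 1 := by linarith
      rw [← h, this]; linarith
    · have : 0 < α * α * (S z * T z - N) := mul_pos (mul_pos h h) (by linarith)
      linarith
  have hKU : connectedComponentIn {z : ℝ × ℝ | S z * T z = N}ᶜ x = U := by
    apply Set.Subset.antisymm
    · have hopU : IsOpen U :=
        (isOpen_lt continuous_const cS).inter (isOpen_lt continuous_const (cS.mul cT))
      have hopV : IsOpen ({z : ℝ × ℝ | S z < 0} ∪ {z | S z * T z < N}) :=
        (isOpen_lt cS continuous_const).union (isOpen_lt (cS.mul cT) continuous_const)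
      refine isPreconnected_connectedComponentIn.subset_left_of_subset_union hopU hopV ?_ ?_
        ⟨x, mem_connectedComponentIn (ne_of_gt hx), hxS, hx⟩
      · rw [Set.disjoint_left]
        rintro z ⟨h1, h2⟩ (h3 | h3)
        · exact lt_asymm h1 h3
        · exact lt_asymm h2 h3
      · refine (connectedComponentIn_subset _ _).trans ?_
        intro z hz
        rcases lt_or_gt_of_ne (show S z * T z ≠ N from hz) with h | h
        · exact Or.inr (Or.inr h)
        · rcases lt_trichotomy (S z) 0 with h' | h' | h'
          · exact Or.inr (Or.inl h')
          · rw [h', zero_mul] at h; exact absurd h hN.not_gt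
          · exact Or.inl ⟨h', h⟩
    · exact hUconv.isPreconnected.subset_connectedComponentIn ⟨hxS, hx⟩
        (fun z hz => ne_of_gt hz.2)
  rw [hKU]
  apply Set.Subset.antisymm
  · have hcl : IsClosed {z : ℝ × ℝ | 0 ≤ S z ∧ N ≤ S z * T z} :=
      (isClosed_le continuous_const cS).inter (isClosed_le continuous_const (cS.mul cT))
    intro z hz
    have hsub : U ⊆ {z : ℝ × ℝ | 0 ≤ S z ∧ N ≤ S z * T z} := fun w hw => ⟨hw.1.le, hw.2.le⟩
    obtain ⟨h1, h2⟩ := closure_minimal hsub hcl hz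
    refine ⟨lt_of_le_of_ne h1 fun h => ?_, h2⟩
    rw [← h, zero_mul] at h2
    linarith
  · rintro z ⟨h1, h2⟩
    -- dilations of `z` about the center lie in the open region and tend to `z`
    set f : ℝ → ℝ × ℝ := fun ε => (x₀ + (1 + ε) * (z.1 - x₀), y₀ + (1 + ε) * (z.2 - y₀))
    have hf : Continuous f := by fun_prop
    have hf0 : f 0 = z := by ext <;> simp [f]
    have ht : Filter.Tendsto f (nhdsWithin 0 (Set.Ioi 0)) (nhds z) := by
      rw [← hf0]
      exact hf.continuousAt.continuousWithinAt
    refine mem_closure_of_tendsto ht ?_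
    filter_upwards [self_mem_nhdsWithin] with ε hε
    have hε' : 0 < ε := hε
    have e1 : S (f ε) = (1 + ε) * S z := by simp only [f, affForm]; ring
    have e2 : T (f ε) = (1 + ε) * T z := by simp only [f, affForm]; ring
    refine ⟨by rw [e1]; positivity, ?_⟩
    rw [e1, e2]
    have e3 : (1 + ε) * S z * ((1 + ε) * T z) = (1 + ε) ^ 2 * (S z * T z) := by ring
    have e4 : 1 < (1 + ε) ^ 2 := by nlinarith
    rw [e3]
    nlinarith

end Component

/-! ### The bound -/

lemma affForm_neg (p q : ℤ) (x₀ y₀ : ℝ) (z : ℝ × ℝ) :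
    affForm (-p) (-q) x₀ y₀ z = -affForm p q x₀ y₀ z := by
  simp only [affForm]; push_cast; ring

/-- Upper bound `C m^(1/3) (log₂ m + 2)`, with `C = 2^(7/3) π^(2/3)` and
`m = max {2Δ, |n|/Δ}`, on the number of vertices of the convex hull of the integer
points in the closure `H` of a convex connected component of the complement of a
hyperbola with integer coefficients and positive integer discriminant `Δ`. -/
theorem statement3 (a b c Δ : ℤ) (hΔ : 0 < Δ)
    (hdisc : (Δ : ℝ) = Real.sqrt ((b : ℝ) ^ 2 - 4 * (a : ℝ) * (c : ℝ)))
    (x₀ y₀ n : ℝ) (hn : n ≠ 0)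
    (x : ℝ × ℝ) (hx : x ∉ hypSet a b c x₀ y₀ n)
    (K : Set (ℝ × ℝ)) (hK : K = connectedComponentIn (hypSet a b c x₀ y₀ n)ᶜ x)
    (hKconv : Convex ℝ K)
    (H : Set (ℝ × ℝ)) (hH : H = closure K)
    (m : ℝ) (hm : m = max (2 * (Δ : ℝ)) (|n| / (Δ : ℝ))) :
    (Set.extremePoints ℝ (convexHull ℝ (H ∩ intLattice))).Finite ∧
    ((Set.extremePoints ℝ (convexHull ℝ (H ∩ intLattice))).ncard : ℝ) ≤
      2 ^ ((7 : ℝ) / 3) * Real.pi ^ ((2 : ℝ) / 3) * m ^ ((1 : ℝ) / 3) *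
        (Real.logb 2 m + 2) := by
  classical
  have hΔ' : (0 : ℝ) < Δ := by exact_mod_cast hΔ
  have hdiscℤ : b ^ 2 - 4 * a * c = Δ ^ 2 := by
    have hpos : 0 < (b : ℝ) ^ 2 - 4 * a * c := by
      rw [hdisc] at hΔ'; exact Real.sqrt_pos.1 hΔ'
    have : (b : ℝ) ^ 2 - 4 * a * c = Δ ^ 2 := by rw [hdisc, Real.sq_sqrt hpos.le]
    exact_mod_cast this
  have hN : 0 < |n| := abs_pos.2 hn
  -- for `n < 0` one factor is negated and the two are exchanged, which keeps the determinant `Δ`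
  obtain ⟨p, q, r, s, hdet, hset⟩ : ∃ p q r s : ℤ, p * s - q * r = Δ ∧
      hypSet a b c x₀ y₀ n
        = {z : ℝ × ℝ | affForm p q x₀ y₀ z * affForm r s x₀ y₀ z = |n|} := by
    obtain ⟨p, q, r, s, ha, hb, hc, hdet⟩ := exists_int_factorization a b c Δ hdiscℤ
    rcases lt_or_gt_of_ne hn with h | h
    · refine ⟨-r, -s, p, q, by linarith, ?_⟩
      ext z
      simp only [hypSet, Set.mem_ofPred_eq, abs_of_neg h, ha, hb, hc, affForm]
      push_cast
      constructor <;> intro e <;> linarith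
    · refine ⟨p, q, r, s, hdet, ?_⟩
      ext z
      simp only [hypSet, Set.mem_ofPred_eq, abs_of_pos h, ha, hb, hc, affForm]
      push_cast
      constructor <;> intro e <;> linarith
  rw [hset] at hx hK
  subst hK
  have hlt := lt_of_convex_component hN hΔ hdet hx hKconv
  -- negating both factors, if necessary, makes them positive on the component
  obtain ⟨p, q, r, s, hdet, hHside⟩ : ∃ p q r s : ℤ, p * s - q * r = Δ ∧
      H = convexSide p q r s x₀ y₀ |n| := by
    rcases lt_trichotomy (affForm p q x₀ y₀ x) 0 with h | h | h
    · refine ⟨-p, -q, -r, -s, by linarith, ?_⟩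
      rw [hH, ← closure_component hN (x := x) (by rw [affForm_neg, affForm_neg]; linarith)
        (by rw [affForm_neg]; linarith)]
      simp only [affForm_neg, neg_mul_neg]
    · rw [h, zero_mul] at hlt; exact absurd hlt hN.not_gt
    · exact ⟨p, q, r, s, hdet, by rw [hH, closure_component hN hlt h]⟩
  have hm2Δ : 2 * (Δ : ℝ) ≤ m := by rw [hm]; exact le_max_left _ _
  have hNm : |n| ≤ m * Δ := by
    rw [← div_le_iff₀ hΔ', hm]; exact le_max_right _ _
  have hm2 : 2 ≤ m := by
    have : (1 : ℝ) ≤ Δ := by exact_mod_cast hΔ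
    linarith
  have hcube : (m ^ ((1 : ℝ) / 3)) ^ 3 = m := by
    rw [← Real.rpow_natCast, ← Real.rpow_mul (by linarith)]
    norm_num
  have hbound : ∀ F : Finset (ℝ × ℝ),
      (∀ v ∈ F, v ∈ Set.extremePoints ℝ (convexHull ℝ (H ∩ intLattice))) →
      (F.card : ℝ) ≤ 2 ^ ((7 : ℝ) / 3) * Real.pi ^ ((2 : ℝ) / 3) * m ^ ((1 : ℝ) / 3) *
        (Real.logb 2 m + 2) := by
    intro F hF
    rw [hHside] at hF
    have hcard : (F.image fun z => (affForm p q x₀ y₀ z, affForm r s x₀ y₀ z)).card = F.card := by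
      apply Finset.card_image_of_injOn
      intro z _ w _ hzw
      exact affForm_injective hΔ hdet (congrArg Prod.fst hzw) (congrArg Prod.snd hzw)
    rw [← hcard]
    exact ((isVertexConfig_image hN hΔ hdet F hF).card_le hΔ' hN (by positivity) hcube hNm hm2Δ
      (by linarith)).trans (numeric_bound hm2)
  -- finiteness follows from the uniform bound on finite sets of vertices
  have hfin : (Set.extremePoints ℝ (convexHull ℝ (H ∩ intLattice))).Finite := by
    by_contra hinf
    obtain ⟨k, hk⟩ := exists_nat_gt (2 ^ ((7 : ℝ) / 3) * Real.pi ^ ((2 : ℝ) / 3) *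
      m ^ ((1 : ℝ) / 3) * (Real.logb 2 m + 2))
    obtain ⟨F, hF, hFk⟩ := Set.Infinite.exists_subset_card_eq hinf k
    have := hbound F (fun v hv => hF hv)
    rw [hFk] at this
    linarith
  refine ⟨hfin, ?_⟩
  rw [Set.ncard_eq_toFinset_card _ hfin]
  exact hbound _ (fun v hv => hfin.mem_toFinset.1 hv)

end
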